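/- For every partition λ ⊢ n, the multiplicity of the Specht module SP_λ in the representation of S_n induced from the identity representation of the Young subgroup H(λ) equals one: ⟨φ_λ, χ_{SP_λ}⟩ = 1. -/

import Mathlib

open scoped Classical

noncomputable section

open MvPolynomial

/-- Partial sums of the row lengths of a Young diagram. -/
def rowPartialSum (lam : YoungDiagram) (i : ℕ) : ℕ :=
  ∑ j ∈ Finset.range i, lam.rowLen j

/-- The (0-indexed) row of the canonical tableau of shape `lam` containing the entry `m`
(the entries `0,…,n-1` fill the cells consecutively row by row). -/
def rowIndex (lam : YoungDiagram) (m : ℕ) : ℕ :=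
  ((Finset.range (m + 1)).filter fun i => rowPartialSum lam (i + 1) ≤ m).card

/-- The Young subgroup `H(λ) ≤ S_n`: permutations preserving each row of the canonical
tableau of shape `λ`. -/
def youngH (n : ℕ) (lam : YoungDiagram) : Subgroup (Equiv.Perm (Fin n)) where
  carrier := {g | ∀ m : Fin n, rowIndex lam (g m) = rowIndex lam m}
  one_mem' := by intro m; simp
  mul_mem' := by
    intro a b ha hb m
    have h1 := ha (b m)
    have h2 := hb m
    simpa [Equiv.Perm.mul_apply] using h1.trans h2
  inv_mem' := by
    intro a ha m
    simpa using (ha (a⁻¹ m)).symm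

/-- The character of the representation induced from the trivial representation of a
subgroup `H`:  `φ(g) = (1/|H|) · #{x : x⁻¹ g x ∈ H}`. -/
noncomputable def indTrivChar {G : Type*} [Group G] (H : Subgroup G) (g : G) : ℂ :=
  (Nat.card H : ℂ)⁻¹ * (Nat.card {x : G // x⁻¹ * g * x ∈ H} : ℂ)

/-- The inner product of class functions on a finite group:
`⟨a,b⟩ = (1/|G|) Σ_g a g * conj (b g)`. -/
noncomputable def innerChar {G : Type*} [Group G] [Fintype G] (a b : G → ℂ) : ℂ :=
  (Fintype.card G : ℂ)⁻¹ * ∑ g : G, a g * (starRingEnd ℂ) (b g)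

/-- The Specht polynomial of a bijective filling `T` of the cells of `lam` by `0,…,n-1`:
the product over all pairs of cells in the same column (the first strictly above the
second) of the differences of the corresponding variables — i.e. the product of the
column Vandermonde determinants. -/
noncomputable def spechtPoly (n : ℕ) (lam : YoungDiagram) (T : lam.cells ≃ Fin n) :
    MvPolynomial (Fin n) ℂ :=
  ∏ p ∈ Finset.univ.filter
      (fun p : lam.cells × lam.cells =>
        (p.1 : ℕ × ℕ).2 = (p.2 : ℕ × ℕ).2 ∧ (p.1 : ℕ × ℕ).1 < (p.2 : ℕ × ℕ).1),
    (X (T p.1) - X (T p.2))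

/-- The Specht module: the linear span of all Specht polynomials of shape `lam`. -/
noncomputable def spechtModule (n : ℕ) (lam : YoungDiagram) :
    Submodule ℂ (MvPolynomial (Fin n) ℂ) :=
  Submodule.span ℂ (Set.range (spechtPoly n lam))

lemma rename_spechtPoly (n : ℕ) (lam : YoungDiagram) (T : lam.cells ≃ Fin n)
    (g : Equiv.Perm (Fin n)) :
    MvPolynomial.rename g (spechtPoly n lam T) = spechtPoly n lam (T.trans g) := by
  simp only [spechtPoly, map_prod, map_sub, MvPolynomial.rename_X]
  rfl

lemma spechtModule_invariant (n : ℕ) (lam : YoungDiagram) (g : Equiv.Perm (Fin n)) :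
    ∀ p ∈ spechtModule n lam,
      (MvPolynomial.rename (σ := Fin n) (R := ℂ) g).toLinearMap p ∈ spechtModule n lam := by
  intro p hp
  induction hp using Submodule.span_induction with
  | mem x hx =>
      obtain ⟨T, rfl⟩ := hx
      simp only [AlgHom.toLinearMap_apply, rename_spechtPoly]
      exact Submodule.subset_span ⟨_, rfl⟩
  | zero => simp
  | add x y _ _ hx hy => rw [map_add]; exact add_mem hx hy
  | smul a x _ hx => rw [map_smul]; exact Submodule.smul_mem _ _ hx

/-- The character of the representation of the symmetric group on the Specht module
(permutations act on polynomials by permuting the variables). -/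
noncomputable def spechtChar (n : ℕ) (lam : YoungDiagram) (g : Equiv.Perm (Fin n)) : ℂ :=
  LinearMap.trace ℂ (spechtModule n lam)
    (LinearMap.restrict (MvPolynomial.rename (σ := Fin n) (R := ℂ) g).toLinearMap
      (spechtModule_invariant n lam g))

/-! By Frobenius reciprocity, the multiplicity is the dimension of the coinvariants of the Specht
module under the Young subgroup `H(λ)`. If two entries of `T` share a column of `T` and a row of
`t_λ`, then swapping them is an element of `H(λ)` that negates `SP_T`, so the class of `SP_T`
vanishes. Otherwise the pairs (row in `t_λ`, column in `T`) of the entries are distinct cells with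
the row and column lengths of `λ`, so they fill the diagram of `λ` by the uniqueness part of the
Gale–Ryser theorem; the resulting tableau is column-equivalent to `T` and row-equivalent to `t_λ`,
whence `SP_T ≡ ± SP_{t_λ}`. Finally, the class of `SP_{t_λ}` is nonzero because evaluating each
variable at the row index of its entry in `t_λ` is an `H(λ)`-invariant functional. -/

section RepresentationTheory

open Representation

variable {G : Type*} [Group G] [Fintype G]

section Coinvariants

variable {k V : Type*} [CommRing k] [Invertible (Fintype.card G : k)] [AddCommGroup V] [Module k V]
  (ρ : Representation k G V)

lemma averageMap_self_apply (g : G) (v : V) : ρ.averageMap (ρ g v) = ρ.averageMap v := by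
  rw [averageMap, ← ρ.asAlgebraHom_single_one, ← Module.End.mul_apply, ← map_mul,
    GroupAlgebra.mul_average_right]

lemma coinvariants_mk_averageMap (v : V) :
    Coinvariants.mk ρ (ρ.averageMap v) = Coinvariants.mk ρ v := by
  simp [GroupAlgebra.average, map_sum, Finset.card_univ, ← Nat.cast_smul_eq_nsmul k, smul_smul]

/-- Averaging over a finite group whose order is invertible identifies the coinvariants of a
representation with its invariants. -/
def coinvariantsEquivInvariants : ρ.Coinvariants ≃ₗ[k] ρ.invariants :=
  LinearEquiv.ofLinearMap
    (Coinvariants.lift ρ (ρ.averageMap.codRestrict _ ρ.averageMap_invariant)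
      fun g => LinearMap.ext fun v => Subtype.ext (averageMap_self_apply ρ g v))
    (Coinvariants.mk ρ ∘ₗ ρ.invariants.subtype)
    (LinearMap.ext fun v => Subtype.ext (ρ.averageMap_id v v.2))
    (Coinvariants.hom_ext (LinearMap.ext (coinvariants_mk_averageMap ρ)))

end Coinvariants

lemma innerChar_indTrivChar (H : Subgroup G) {χ : G → ℂ} (hχ : ∀ g h, χ (h * g * h⁻¹) = χ g) :
    innerChar (indTrivChar H) χ = (Nat.card H : ℂ)⁻¹ * ∑ h : H, starRingEnd ℂ (χ h) := by
  have card_conj (g : G) : (Nat.card {x : G // x⁻¹ * g * x ∈ H} : ℂ) =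
      ∑ x : G, if x⁻¹ * g * x ∈ H then 1 else 0 := by
    rw [Nat.card_eq_fintype_card, Fintype.card_subtype, Finset.sum_boole]
  have sum_conj (x : G) : ∑ g : G, (if x⁻¹ * g * x ∈ H then starRingEnd ℂ (χ g) else 0) =
      ∑ h : H, starRingEnd ℂ (χ h) := by
    have conj_cancel (g : G) : x⁻¹ * (MulAut.conj x).toEquiv g * x = g := by simp [mul_assoc]
    have χ_conj (g : G) : χ ((MulAut.conj x).toEquiv g) = χ g := hχ g x
    rw [← (MulAut.conj x).toEquiv.sum_comp]
    simp only [conj_cancel, χ_conj]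
    rw [← Finset.sum_filter]
    exact Finset.sum_subtype _ (by simp) _
  calc innerChar (indTrivChar H) χ
      = (Fintype.card G : ℂ)⁻¹ * ((Nat.card H : ℂ)⁻¹ * ∑ x : G, ∑ g : G,
          if x⁻¹ * g * x ∈ H then starRingEnd ℂ (χ g) else 0) := by
        rw [Finset.sum_comm]
        simp only [innerChar, indTrivChar, card_conj, Finset.mul_sum, Finset.sum_mul]
        simp
    _ = (Nat.card H : ℂ)⁻¹ * ∑ h : H, starRingEnd ℂ (χ h) := by
        simp only [sum_conj, Finset.sum_const, Finset.card_univ, nsmul_eq_mul]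
        field_simp

theorem innerChar_indTrivChar_character {V : Type*} [AddCommGroup V] [Module ℂ V]
    [FiniteDimensional ℂ V] (H : Subgroup G) (ρ : Representation ℂ G V) :
    innerChar (indTrivChar H) ρ.character =
      Module.finrank ℂ (Coinvariants (ρ.comp H.subtype)) := by
  have : Invertible (Nat.card H : ℂ) := invertibleOfNonzero (by simp)
  have : Invertible (Fintype.card H : ℂ) := invertibleOfNonzero (by simp)
  have average_eq : (Nat.card H : ℂ)⁻¹ * ∑ h : H, ρ.character h =
      Module.finrank ℂ (invariants (ρ.comp H.subtype)) :=
    card_inv_mul_sum_char_eq_finrank (ρ.comp H.subtype)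
  calc innerChar (indTrivChar H) ρ.character
      = starRingEnd ℂ ((Nat.card H : ℂ)⁻¹ * ∑ h : H, ρ.character h) := by
        simp [innerChar_indTrivChar H ρ.char_conj]
    _ = Module.finrank ℂ (invariants (ρ.comp H.subtype)) := by
        rw [average_eq, map_natCast]
    _ = Module.finrank ℂ (Coinvariants (ρ.comp H.subtype)) := by
        rw [(coinvariantsEquivInvariants _).finrank_eq]

end RepresentationTheory

lemma rowPartialSum_eq_card (lam : YoungDiagram) (i : ℕ) :
    rowPartialSum lam i = {c ∈ lam.cells | c.1 < i}.card := by
  simp [rowPartialSum, YoungDiagram.rowLen_eq_card, YoungDiagram.row,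
    Finset.sum_card_fiberwise_eq_card_filter]

lemma rowPartialSum_mono (lam : YoungDiagram) : Monotone (rowPartialSum lam) := fun _ _ h =>
  Finset.sum_le_sum_of_subset (Finset.range_mono h)

lemma rowPartialSum_add_lt_rowPartialSum_succ {lam : YoungDiagram} {i j : ℕ}
    (h : (i, j) ∈ lam) : rowPartialSum lam i + j < rowPartialSum lam (i + 1) := by
  simpa [rowPartialSum, Finset.sum_range_succ] using YoungDiagram.mem_iff_lt_rowLen.1 h

lemma le_rowPartialSum {lam : YoungDiagram} {i j : ℕ} (h : (i, j) ∈ lam) :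
    i ≤ rowPartialSum lam i := by
  have one_le_rowLen : ∀ k ∈ Finset.range i, 1 ≤ lam.rowLen k := fun k hk =>
    Nat.one_le_iff_ne_zero.2 <| Nat.ne_zero_of_lt <| YoungDiagram.mem_iff_lt_rowLen.1 <|
      lam.up_left_mem (Finset.mem_range.1 hk).le le_rfl h
  simpa [rowPartialSum] using Finset.card_nsmul_le_sum _ _ _ one_le_rowLen

lemma rowIndex_rowPartialSum_add {lam : YoungDiagram} {i j : ℕ} (h : (i, j) ∈ lam) :
    rowIndex lam (rowPartialSum lam i + j) = i := by
  have hi := le_rowPartialSum h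
  have hj := rowPartialSum_add_lt_rowPartialSum_succ h
  suffices {k ∈ Finset.range (rowPartialSum lam i + j + 1) |
      rowPartialSum lam (k + 1) ≤ rowPartialSum lam i + j} = Finset.range i by
    rw [rowIndex, this, Finset.card_range]
  ext k
  simp only [Finset.mem_filter, Finset.mem_range]
  constructor
  · rintro ⟨-, hk⟩
    by_contra! hik
    have := rowPartialSum_mono lam (Nat.add_le_add_right hik 1)
    omega
  · intro hk
    have := rowPartialSum_mono lam (show k + 1 ≤ i from hk)
    omega

/-- The canonical tableau `t_λ` of shape `lam`: the entry of the cell `(i, j)` is preceded by the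
entries of all the rows above row `i` and by `j` entries of row `i`. -/
def canonicalTableau {n : ℕ} {lam : YoungDiagram} (hlam : lam.card = n) : lam.cells ≃ Fin n :=
  Equiv.ofBijective
    (fun c => ⟨rowPartialSum lam c.1.1 + c.1.2,
      hlam ▸ (rowPartialSum_add_lt_rowPartialSum_succ ((lam.mem_cells _).1 c.2)).trans_le
        ((rowPartialSum_eq_card lam _).trans_le (Finset.card_filter_le _ _))⟩) <| by
    refine (Fintype.bijective_iff_injective_and_card _).2 ⟨?_, by simpa using hlam⟩
    rintro ⟨⟨i, j⟩, hc⟩ ⟨⟨i', j'⟩, hc'⟩ h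
    have entry_eq : rowPartialSum lam i + j = rowPartialSum lam i' + j' := congrArg Fin.val h
    obtain rfl : i = i' := by
      rw [← rowIndex_rowPartialSum_add hc, entry_eq, rowIndex_rowPartialSum_add hc']
    simpa using entry_eq

lemma rowIndex_canonicalTableau {n : ℕ} {lam : YoungDiagram} (hlam : lam.card = n)
    (c : lam.cells) : rowIndex lam (canonicalTableau hlam c) = c.1.1 :=
  rowIndex_rowPartialSum_add c.2

lemma row_canonicalTableau_symm {n : ℕ} {lam : YoungDiagram} (hlam : lam.card = n) (k : Fin n) :
    ((canonicalTableau hlam).symm k).1.1 = rowIndex lam k := by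
  rw [← rowIndex_canonicalTableau hlam, Equiv.apply_symm_apply]

lemma card_cells_filter_lt_snd_eq (μ : YoungDiagram) (i j : ℕ) :
    {c ∈ μ.cells | c.1 < i ∧ c.2 = j}.card = min i (μ.colLen j) := by
  have : {c ∈ μ.cells | c.1 < i ∧ c.2 = j} = Finset.range (min i (μ.colLen j)) ×ˢ {j} := by
    ext ⟨a, b⟩
    simp only [Finset.mem_filter, YoungDiagram.mem_cells, YoungDiagram.mem_iff_lt_colLen,
      Finset.mem_product, Finset.mem_range, Finset.mem_singleton, lt_min_iff]
    grind
  rw [this, Finset.card_product, Finset.card_range, Finset.card_singleton, mul_one]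

lemma card_filter_lt_snd_eq_le (s : Finset (ℕ × ℕ)) (i j : ℕ) :
    {c ∈ s | c.1 < i ∧ c.2 = j}.card ≤ min i {c ∈ s | c.2 = j}.card := by
  refine le_min ?_ (Finset.card_le_card (Finset.monotone_filter_right _ fun _ _ h => h.2))
  calc {c ∈ s | c.1 < i ∧ c.2 = j}.card
      ≤ (Finset.range i ×ˢ {j}).card := Finset.card_le_card fun ⟨a, b⟩ hc => by
        simpa only [Finset.mem_product, Finset.mem_range, Finset.mem_singleton] using
          (Finset.mem_filter.1 hc).2
    _ = i := by simp

-- Uniqueness part of Gale–Ryser: for every `i`, a column of `s` has at most as many cells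
-- above row `i` as the same column of `μ`, and summing over the columns gives equality.
lemma subset_cells_of_card_row_eq_of_card_col_eq {μ : YoungDiagram} {s : Finset (ℕ × ℕ)}
    (hrow : ∀ i, {c ∈ s | c.1 = i}.card = μ.rowLen i)
    (hcol : ∀ j, {c ∈ s | c.2 = j}.card = μ.colLen j) : s ⊆ μ.cells := by
  intro c hc
  by_contra hcμ
  set i := μ.colLen c.2
  have hci : ¬ c.1 < i := by rwa [YoungDiagram.mem_cells, YoungDiagram.mem_iff_lt_colLen] at hcμ
  have col_le (j : ℕ) : {c ∈ s | c.1 < i ∧ c.2 = j}.card ≤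
      {c ∈ μ.cells | c.1 < i ∧ c.2 = j}.card := by
    rw [card_cells_filter_lt_snd_eq, ← hcol]
    exact card_filter_lt_snd_eq_le s i j
  have col_lt : {d ∈ s | d.1 < i ∧ d.2 = c.2}.card <
      {d ∈ μ.cells | d.1 < i ∧ d.2 = c.2}.card := by
    have hsub : {d ∈ s | d.1 < i ∧ d.2 = c.2} ⊆ {d ∈ s | d.2 = c.2} :=
      Finset.monotone_filter_right _ fun _ _ h => h.2
    rw [card_cells_filter_lt_snd_eq, min_self]
    refine (Finset.card_lt_card ?_).trans_eq (hcol c.2)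
    exact (Finset.ssubset_iff_of_subset hsub).2 ⟨c, by simp [hc], by simp [hci]⟩
  have above_eq : {d ∈ s | d.1 < i}.card = {d ∈ μ.cells | d.1 < i}.card := by
    simp only [← Finset.mem_range, ← Finset.sum_card_fiberwise_eq_card_filter, hrow,
      YoungDiagram.rowLen_eq_card, YoungDiagram.row]
  let columns := (s ∪ μ.cells).image Prod.snd
  have above_eq_sum {t : Finset (ℕ × ℕ)} (ht : t ⊆ s ∪ μ.cells) :
      {d ∈ t | d.1 < i}.card = ∑ j ∈ columns, {d ∈ t | d.1 < i ∧ d.2 = j}.card := by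
    simp only [← Finset.filter_filter]
    exact Finset.card_eq_sum_card_fiberwise fun d hd =>
      Finset.mem_image_of_mem _ (ht (Finset.mem_filter.1 hd).1)
  refine above_eq.not_lt ?_
  rw [above_eq_sum Finset.subset_union_left, above_eq_sum Finset.subset_union_right]
  exact Finset.sum_lt_sum (fun j _ => col_le j)
    ⟨c.2, Finset.mem_image_of_mem _ (Finset.mem_union_left _ hc), col_lt⟩

theorem eq_cells_of_card_row_eq_of_card_col_eq {μ : YoungDiagram} {s : Finset (ℕ × ℕ)}
    (hrow : ∀ i, {c ∈ s | c.1 = i}.card = μ.rowLen i)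
    (hcol : ∀ j, {c ∈ s | c.2 = j}.card = μ.colLen j) : s = μ.cells := by
  have hsub := subset_cells_of_card_row_eq_of_card_col_eq hrow hcol
  refine hsub.antisymm fun c hc => ?_
  have row_eq : {d ∈ s | d.1 = c.1} = {d ∈ μ.cells | d.1 = c.1} :=
    Finset.eq_of_subset_of_card_le (Finset.filter_subset_filter _ hsub)
      ((μ.rowLen_eq_card.symm.trans (hrow c.1).symm).le)
  exact (Finset.mem_filter.1 (row_eq.ge (Finset.mem_filter.2 ⟨hc, rfl⟩))).1

lemma card_filter_symm_apply {α : Type*} [Fintype α] {s : Finset (ℕ × ℕ)} (T : s ≃ α)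
    (p : ℕ × ℕ → Prop) [DecidablePred p] : Finset.card {a | p (T.symm a)} = {c ∈ s | p c}.card := by
  refine Finset.card_nbij (fun a => (T.symm a).1) (by simp [Set.MapsTo]) ?_ fun c hc => ?_
  · exact (Subtype.val_injective.comp T.symm.injective).injOn
  · have ⟨hcs, hpc⟩ := Finset.mem_filter.1 hc
    exact ⟨T ⟨c, hcs⟩, by simpa using hpc, by simp⟩

lemma exists_equiv_row_eq_column_eq {α : Type*} [Finite α] {μ : YoungDiagram}
    (S T : μ.cells ≃ α)
    (hST : Function.Injective fun a => ((S.symm a).1.1, (T.symm a).1.2)) :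
    ∃ U : μ.cells ≃ α, ∀ a, (U.symm a).1 = ((S.symm a).1.1, (T.symm a).1.2) := by
  have : Fintype α := Fintype.ofFinite α
  have image_eq : Finset.univ.image (fun a => ((S.symm a).1.1, (T.symm a).1.2)) = μ.cells := by
    refine eq_cells_of_card_row_eq_of_card_col_eq (fun i => ?_) fun j => ?_
    · rw [Finset.filter_image, Finset.card_image_of_injective _ hST, μ.rowLen_eq_card]
      exact card_filter_symm_apply S fun c => c.1 = i
    · rw [Finset.filter_image, Finset.card_image_of_injective _ hST, μ.colLen_eq_card]
      exact card_filter_symm_apply T fun c => c.2 = j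
  let cell (a : α) : μ.cells :=
    ⟨((S.symm a).1.1, (T.symm a).1.2),
      image_eq.le (Finset.mem_image_of_mem _ (Finset.mem_univ a))⟩
  have cell_injective : Function.Injective cell := fun a b h => hST (congrArg Subtype.val h)
  have cell_bijective : Function.Bijective cell :=
    (Fintype.bijective_iff_injective_and_card _).2 ⟨cell_injective, (Fintype.card_congr S).symm⟩
  exact ⟨(Equiv.ofBijective cell cell_bijective).symm, fun _ => rfl⟩

theorem prod_filter_lt_comp_perm {α β R : Type*} [Fintype α] [DecidableEq α] [LinearOrder β]
    [CommRing R] {key : α → β} (hkey : Function.Injective key) (σ : Equiv.Perm α) {f : α → α → R}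
    (hf : ∀ x y, f x y = -f y x) :
    ∏ p : α × α with key p.1 < key p.2, f (σ p.1) (σ p.2) =
      Equiv.Perm.sign σ * ∏ p : α × α with key p.1 < key p.2, f p.1 p.2 := by
  obtain ⟨e, key_lt⟩ : ∃ e : Fin (Fintype.card α) ≃ α, ∀ i j, key (e i) < key (e j) ↔ i < j :=
    let _ : LinearOrder α := LinearOrder.lift' key hkey
    let e : Fin (Fintype.card α) ≃o α := Fintype.orderIsoFinOfCardEq α rfl
    ⟨e.toEquiv, fun _ _ => e.lt_iff_lt⟩
  have prod_eq (g : α → α → R) : ∏ p : α × α with key p.1 < key p.2, g p.1 p.2 =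
      ∏ j, ∏ i ∈ Finset.Iio j, g (e i) (e j) := by
    rw [Finset.prod_filter, ← (e.prodCongr e).prod_comp, Fintype.prod_prod_type_right]
    simp only [Equiv.prodCongr_apply, Prod.map, key_lt, ← Finset.prod_filter,
      Finset.filter_gt_eq_Iio]
  rw [prod_eq fun x y => f (σ x) (σ y), prod_eq f, ← Equiv.Perm.sign_permCongr e.symm σ,
    ← Equiv.Perm.prod_Iio_comp_eq_sign_mul_prod _ fun i j => hf (e i) (e j)]
  simp

lemma spechtPoly_trans_of_column_eq {n : ℕ} {lam : YoungDiagram} (T : lam.cells ≃ Fin n)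
    {σ : Equiv.Perm lam.cells} (hσ : ∀ c, (σ c).1.2 = c.1.2) :
    spechtPoly n lam (σ.trans T) = (Equiv.Perm.sign σ : ℤ) • spechtPoly n lam T := by
  let key (c : lam.cells) : ℕ ×ₗ ℕ := toLex (c.1.2, c.1.1)
  have hkey : Function.Injective key := fun c d h => by
    have := Prod.mk.inj (toLex.injective h)
    exact Subtype.ext (Prod.ext this.2 this.1)
  -- The factors `±1` for pairs in different columns make `f` antisymmetric without changing the
  -- product over the pairs in lexicographic order.
  let f (c d : lam.cells) : MvPolynomial (Fin n) ℂ :=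
    if c.1.2 = d.1.2 then X (T c) - X (T d) else if c.1.2 < d.1.2 then 1 else -1
  have hf (c d) : f c d = -f d c := by grind
  have prod_eq {τ : Equiv.Perm lam.cells} (hτ : ∀ c, (τ c).1.2 = c.1.2) :
      spechtPoly n lam (τ.trans T) =
        ∏ p : lam.cells × lam.cells with key p.1 < key p.2, f (τ p.1) (τ p.2) := by
    rw [spechtPoly, Finset.prod_filter, Finset.prod_filter]
    refine Finset.prod_congr rfl fun p _ => ?_
    simp only [key, f, hτ, Prod.Lex.toLex_lt_toLex, Equiv.trans_apply]
    grind
  rw [prod_eq hσ, prod_filter_lt_comp_perm hkey σ hf, zsmul_eq_mul, ← T.refl_trans,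
    prod_eq (τ := Equiv.refl _) fun _ => rfl]
  simp only [Equiv.refl_apply]

/-- The permutation representation on polynomials: permutations act by renaming variables. -/
def polynomialRep (R τ : Type*) [CommSemiring R] :
    Representation R (Equiv.Perm τ) (MvPolynomial τ R) where
  toFun g := (rename g).toLinearMap
  map_one' := LinearMap.ext fun p => by simp
  map_mul' g h := LinearMap.ext fun p => (rename_rename h g p).symm

/-- The Specht module as a representation of the symmetric group. -/
def spechtRep (n : ℕ) (lam : YoungDiagram) :
    Representation ℂ (Equiv.Perm (Fin n)) (spechtModule n lam) :=
  Subrepresentation.toRepresentation (ρ := polynomialRep ℂ (Fin n))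
    ⟨spechtModule n lam, spechtModule_invariant n lam⟩

lemma character_spechtRep (n : ℕ) (lam : YoungDiagram) :
    (spechtRep n lam).character = spechtChar n lam :=
  rfl

/-- The Specht polynomial of `T` as an element of the Specht module. -/
def spechtVector {n : ℕ} {lam : YoungDiagram} (T : lam.cells ≃ Fin n) : spechtModule n lam :=
  ⟨spechtPoly n lam T, Submodule.subset_span ⟨T, rfl⟩⟩

lemma spechtRep_spechtVector {n : ℕ} {lam : YoungDiagram} (g : Equiv.Perm (Fin n))
    (T : lam.cells ≃ Fin n) : spechtRep n lam g (spechtVector T) = spechtVector (T.trans g) :=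
  Subtype.ext (rename_spechtPoly n lam T g)

lemma spechtVector_trans_of_column_eq {n : ℕ} {lam : YoungDiagram} (T : lam.cells ≃ Fin n)
    {σ : Equiv.Perm lam.cells} (hσ : ∀ c, (σ c).1.2 = c.1.2) :
    spechtVector (σ.trans T) = (Equiv.Perm.sign σ : ℤ) • spechtVector T :=
  Subtype.ext (spechtPoly_trans_of_column_eq T hσ)

lemma span_range_spechtVector (n : ℕ) (lam : YoungDiagram) :
    Submodule.span ℂ (Set.range (spechtVector : (lam.cells ≃ Fin n) → spechtModule n lam)) = ⊤ := by
  refine Submodule.map_injective_of_injective (spechtModule n lam).injective_subtype ?_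
  rw [Submodule.map_span, Submodule.map_top, Submodule.range_subtype, ← Set.range_comp]
  rfl

section Coinvariants

open Representation

variable {n : ℕ} {lam : YoungDiagram}

/-- The class of the Specht polynomial of `T` in the coinvariants of the Specht module under the
Young subgroup. -/
def spechtClass (T : lam.cells ≃ Fin n) :
    Coinvariants ((spechtRep n lam).comp (youngH n lam).subtype) :=
  Coinvariants.mk _ (spechtVector T)

lemma spechtClass_trans_of_mem_youngH (T : lam.cells ≃ Fin n) {g : Equiv.Perm (Fin n)}
    (hg : g ∈ youngH n lam) : spechtClass (T.trans g) = spechtClass T := by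
  rw [spechtClass, ← spechtRep_spechtVector]
  exact Coinvariants.mk_self_apply _ (⟨g, hg⟩ : youngH n lam) _

lemma spechtClass_trans_of_column_eq (T : lam.cells ≃ Fin n)
    {σ : Equiv.Perm lam.cells} (hσ : ∀ c, (σ c).1.2 = c.1.2) :
    spechtClass (σ.trans T) = (Equiv.Perm.sign σ : ℤ) • spechtClass T := by
  rw [spechtClass, spechtVector_trans_of_column_eq T hσ, map_zsmul, spechtClass]

lemma swap_mem_youngH {a b : Fin n} (h : rowIndex lam a = rowIndex lam b) :
    Equiv.swap a b ∈ youngH n lam := by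
  intro m
  rw [Equiv.swap_apply_def]
  split_ifs <;> simp_all

lemma spechtClass_eq_zero_of_rowIndex_eq (T : lam.cells ≃ Fin n) {c d : lam.cells} (hcd : c ≠ d)
    (hcol : c.1.2 = d.1.2) (hrow : rowIndex lam (T c) = rowIndex lam (T d)) :
    spechtClass T = 0 := by
  have column_eq (x : lam.cells) : (Equiv.swap c d x).1.2 = x.1.2 := by
    rw [Equiv.swap_apply_def]; grind
  have swap_trans : (Equiv.swap c d).trans T = T.trans (Equiv.swap (T c) (T d)) := by
    rw [← Equiv.symm_trans_swap_trans, ← Equiv.trans_assoc, ← Equiv.trans_assoc,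
      Equiv.self_trans_symm, Equiv.refl_trans]
  have eq_neg_self : spechtClass T = -spechtClass T := by
    calc spechtClass T = spechtClass ((Equiv.swap c d).trans T) := by
          rw [swap_trans, spechtClass_trans_of_mem_youngH T (swap_mem_youngH hrow)]
      _ = -spechtClass T := by
          rw [spechtClass_trans_of_column_eq T column_eq, Equiv.Perm.sign_swap hcd]
          simp
  have : IsAddTorsionFree (Coinvariants ((spechtRep n lam).comp (youngH n lam).subtype)) :=
    .of_isTorsionFree ℂ _
  exact self_eq_neg.1 eq_neg_self

lemma exists_spechtClass_eq_zsmul (hlam : lam.card = n) (T : lam.cells ≃ Fin n) :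
    ∃ a : ℤ, spechtClass T = a • spechtClass (canonicalTableau hlam) := by
  let t := canonicalTableau hlam
  by_cases hT : Function.Injective fun k => ((t.symm k).1.1, (T.symm k).1.2)
  · obtain ⟨U, hU⟩ := exists_equiv_row_eq_column_eq t T hT
    have column_eq (c : lam.cells) : (U.symm (T c)).1.2 = c.1.2 := by simp [hU]
    have mem_youngH : t.symm.trans U ∈ youngH n lam := fun k => by
      rw [← row_canonicalTableau_symm hlam, ← row_canonicalTableau_symm hlam]
      simpa using (congrArg Prod.fst (hU (U (t.symm k)))).symm
    refine ⟨Equiv.Perm.sign (T.trans U.symm), ?_⟩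
    calc spechtClass T = spechtClass ((T.trans U.symm).trans U) := by simp [Equiv.trans_assoc]
      _ = (Equiv.Perm.sign (T.trans U.symm) : ℤ) • spechtClass U :=
        spechtClass_trans_of_column_eq U column_eq
      _ = (Equiv.Perm.sign (T.trans U.symm) : ℤ) • spechtClass (t.trans (t.symm.trans U)) := by
        rw [← Equiv.trans_assoc, Equiv.self_trans_symm, Equiv.refl_trans]
      _ = (Equiv.Perm.sign (T.trans U.symm) : ℤ) • spechtClass t := by
        rw [spechtClass_trans_of_mem_youngH t mem_youngH]
  · obtain ⟨a, b, hab, hne⟩ := Function.not_injective_iff.1 hT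
    have row_eq : rowIndex lam a = rowIndex lam b := by
      simpa only [t, row_canonicalTableau_symm] using congrArg Prod.fst hab
    have column_eq : (T.symm a).1.2 = (T.symm b).1.2 := (Prod.mk.inj hab).2
    refine ⟨0, ?_⟩
    rw [zero_smul]
    exact spechtClass_eq_zero_of_rowIndex_eq T (T.symm.injective.ne hne) column_eq
      (by simpa using row_eq)

lemma spechtClass_canonicalTableau_ne_zero (hlam : lam.card = n) :
    spechtClass (canonicalTableau hlam) ≠ 0 := by
  let evalRow : spechtModule n lam →ₗ[ℂ] ℂ :=
    (aeval fun k : Fin n => (rowIndex lam k : ℂ)).toLinearMap ∘ₗ (spechtModule n lam).subtype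
  have evalRow_invariant (h : youngH n lam) :
      evalRow ∘ₗ (spechtRep n lam).comp (youngH n lam).subtype h = evalRow :=
    LinearMap.ext fun p => (aeval_rename _ _ _).trans <|
      congrArg (fun x : Fin n → ℂ => aeval x (p : MvPolynomial (Fin n) ℂ)) <|
        funext fun k => congrArg Nat.cast (h.2 k)
  have evalRow_ne_zero : evalRow (spechtVector (canonicalTableau hlam)) ≠ 0 := by
    have evalRow_eq : evalRow (spechtVector (canonicalTableau hlam)) =
        ∏ p : lam.cells × lam.cells with p.1.1.2 = p.2.1.2 ∧ p.1.1.1 < p.2.1.1,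
          ((p.1.1.1 : ℂ) - p.2.1.1) := by
      simp [evalRow, spechtVector, spechtPoly, rowIndex_canonicalTableau]
    rw [evalRow_eq]
    exact Finset.prod_ne_zero_iff.2 fun p hp =>
      sub_ne_zero.2 (Nat.cast_injective.ne (Finset.mem_filter.1 hp).2.2.ne)
  intro h
  exact evalRow_ne_zero <| by
    simpa [spechtClass] using congrArg (Coinvariants.lift _ evalRow evalRow_invariant) h

theorem finrank_coinvariants_spechtRep (hlam : lam.card = n) :
    Module.finrank ℂ (Coinvariants ((spechtRep n lam).comp (youngH n lam).subtype)) = 1 := by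
  refine finrank_eq_one _ (spechtClass_canonicalTableau_ne_zero hlam) fun w => ?_
  suffices LinearMap.range (Coinvariants.mk _) ≤ ℂ ∙ spechtClass (canonicalTableau hlam) by
    obtain ⟨v, rfl⟩ := Coinvariants.mk_surjective _ w
    exact Submodule.mem_span_singleton.1 (this ⟨v, rfl⟩)
  rw [LinearMap.range_eq_map, ← span_range_spechtVector, Submodule.map_span_le]
  rintro _ ⟨T, rfl⟩
  obtain ⟨a, ha⟩ := exists_spechtClass_eq_zsmul hlam T
  exact Submodule.mem_span_singleton.2 ⟨a, (Int.cast_smul_eq_zsmul ℂ a _).trans ha.symm⟩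

end Coinvariants

/-- The Specht module `SP_λ` occurs with multiplicity one in the representation of `S_n`
induced from the identity representation of the Young subgroup `H(λ)`. -/
theorem mult_specht_in_ind_eq_one (n : ℕ) (lam : YoungDiagram) (hlam : lam.card = n) :
    innerChar (indTrivChar (youngH n lam)) (spechtChar n lam) = 1 := by
  have : FiniteDimensional ℂ (spechtModule n lam) :=
    FiniteDimensional.span_of_finite ℂ (Set.finite_range _)
  rw [← character_spechtRep, innerChar_indTrivChar_character,
    finrank_coinvariants_spechtRep hlam, Nat.cast_one]

end
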